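/- Let ρ be a density matrix with entropy E and spectral constants α and β as in the context, and assume α > 0. Then there exist constants δ < 1, C > 0 and n₀ ∈ ℕ such that for all n ≥ n₀, 𝒮(ρ^{⊗n}, δ) > C · 2^{nE + α√n}. -/

import Mathlib

open scoped BigOperators Classical ComplexOrder

/-- A density matrix: positive semidefinite with trace one. -/
def IsDensity {ι : Type*} [Fintype ι] [DecidableEq ι] (ρ : Matrix ι ι ℂ) : Prop :=
  ρ.PosSemidef ∧ ρ.trace = 1

/-- The trace distance `D(ρ,σ) = Tr|ρ−σ|`: the sum of the absolute values of the
eigenvalues of the Hermitian matrix `ρ − σ` (no factor 1/2). -/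
noncomputable def traceDist {ι : Type*} [Fintype ι] [DecidableEq ι]
    (ρ σ : Matrix ι ι ℂ) : ℝ :=
  if h : (ρ - σ).IsHermitian then ∑ i, |h.eigenvalues i| else 0

/-- The minimal dimension `𝒮(ρ,δ)` of a `δ`-significant subspace: the minimum rank of an
orthogonal projection `P` (`P = Pᴴ = P²`) with `Tr(Pρ) ≥ δ`. -/
noncomputable def sigDim {ι : Type*} [Fintype ι] [DecidableEq ι]
    (ρ : Matrix ι ι ℂ) (δ : ℝ) : ℕ :=
  sInf {m : ℕ | ∃ P : Matrix ι ι ℂ,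
    P.IsHermitian ∧ P * P = P ∧ δ ≤ ((P * ρ).trace).re ∧ P.rank = m}

/-- The `n`-fold Kronecker power of `ρ`, indexed by `Fin n → ι`. -/
noncomputable def kronPow {ι : Type*} (ρ : Matrix ι ι ℂ) (n : ℕ) :
    Matrix (Fin n → ι) (Fin n → ι) ℂ :=
  Matrix.of fun i j => ∏ k, ρ (i k) (j k)

/-- The rank-one matrix `|u⟩⟨u|`. -/
noncomputable def outer {ι : Type*} (u : ι → ℂ) : Matrix ι ι ℂ :=
  Matrix.of fun i j => u i * starRingEnd ℂ (u j)

/-- The partial trace over the second subsystem. -/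
noncomputable def ptraceB {A B : Type*} [Fintype B]
    (M : Matrix (A × B) (A × B) ℂ) : Matrix A A ℂ :=
  Matrix.of fun a a' => ∑ b, M (a, b) (a', b)

/-!
Let `p` be the vector of eigenvalues of `ρ`. By the spectral theorem `ρ^{⊗n}` is unitarily conjugate
to the diagonal matrix with entries `∏ p (x k)`, the probabilities of the words `x` of length `n`
with i.i.d. letters of law `p`. By the central limit theorem the information content
`-log₂ ∏ p (x k)` exceeds its mean `n E` by more than `a √n` with probability at least some `c > 0`,
for all large `n`. A projection that captures weight `1 - c / 2` has to capture weight `c / 2`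
inside this event; as every word in it has probability at most `2 ^ (-(n E + a √n))`, the rank of
the projection is at least `c / 2 * 2 ^ (n E + a √n)`.
-/

open MeasureTheory ProbabilityTheory Filter

section CentralLimit

variable {Ω : Type*} [MeasurableSpace Ω]

theorem measure_pos_of_isOpen_gaussianReal {μ : ℝ} {v : NNReal} (hv : v ≠ 0) {s : Set ℝ}
    (hs : IsOpen s) (hne : s.Nonempty) : 0 < gaussianReal μ v s :=
  have := (gaussianReal_absolutelyContinuous' μ hv).isOpenPosMeasure
  hs.measure_pos _ hne

theorem exists_pos_eventually_le_measureReal_lt_sum {P : Measure Ω} [IsProbabilityMeasure P]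
    {X : ℕ → Ω → ℝ} (hX : MemLp (X 0) 2 P) (hvar : 0 < Var[X 0; P]) (hindep : iIndepFun X P)
    (hident : ∀ i, IdentDistrib (X i) (X 0) P P) (a : ℝ) :
    ∃ c : ℝ, 0 < c ∧ ∀ᶠ n : ℕ in atTop,
      c ≤ P.real {ω | n * P[X 0] + a * √n < ∑ k ∈ Finset.range n, X k ω} := by
  set G := gaussianReal 0 Var[X 0; P].toNNReal
  have hclt := (tendstoInDistribution_inv_sqrt_mul_sum_sub (HasLaw.id (μ := G)) hX hindep
    hident).tendsto
  have hliminf := ProbabilityMeasure.le_liminf_measure_open_of_tendsto hclt (isOpen_Ioi (a := a))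
  have hG : 0 < G (Set.Ioi a) :=
    measure_pos_of_isOpen_gaussianReal (by simpa using hvar) isOpen_Ioi Set.nonempty_Ioi
  obtain ⟨c, hc0, hc⟩ := ENNReal.lt_iff_exists_nnreal_btwn.1 hG
  refine ⟨c, mod_cast hc0, ?_⟩
  filter_upwards [eventually_lt_of_lt_liminf (hc.trans_le (by simpa using hliminf)),
    eventually_gt_atTop 0] with n hn hn0
  have hsqrt : 0 < √(n : ℝ) := Real.sqrt_pos.2 (mod_cast hn0)
  have hXm : ∀ i, AEMeasurable (X i) P := fun i ↦ (hident i).aemeasurable_fst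
  rw [Measure.map_apply_of_aemeasurable (by fun_prop) measurableSet_Ioi] at hn
  have hset : {ω | n * P[X 0] + a * √n < ∑ k ∈ Finset.range n, X k ω} =
      (fun ω ↦ (√(n : ℝ))⁻¹ * (∑ k ∈ Finset.range n, X k ω - n * P[X 0])) ⁻¹' Set.Ioi a := by
    ext ω
    simp only [Set.mem_ofPred_eq, Set.mem_preimage, Set.mem_Ioi, inv_mul_eq_div, lt_div_iff₀ hsqrt,
      lt_sub_iff_add_lt']
  rw [hset, measureReal_def]
  exact (ENNReal.toReal_lt_toReal ENNReal.coe_ne_top (measure_ne_top _ _)).2 hn |>.le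

theorem exists_pos_eventually_le_pi_real_lt_sum {μ : Measure Ω} [IsProbabilityMeasure μ]
    {f : Ω → ℝ} (hfm : Measurable f) (hf : MemLp f 2 μ) (hvar : 0 < Var[f; μ]) (a : ℝ) :
    ∃ c : ℝ, 0 < c ∧ ∀ᶠ n : ℕ in atTop,
      c ≤ (Measure.pi fun _ : Fin n ↦ μ).real {x | n * μ[f] + a * √n < ∑ k, f (x k)} := by
  have heval := measurePreserving_eval_infinitePi fun _ : ℕ ↦ μ
  have hident : ∀ i : ℕ,
      IdentDistrib (fun ω : ℕ → Ω ↦ f (ω i)) f (Measure.infinitePi fun _ ↦ μ) μ := fun i ↦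
    ⟨(hfm.comp (heval i).measurable).aemeasurable, hfm.aemeasurable,
      (hfm.measurePreserving μ |>.comp (heval i)).map_eq⟩
  obtain ⟨c, hc, hev⟩ := exists_pos_eventually_le_measureReal_lt_sum
    ((hident 0).memLp_iff.2 hf) ((hident 0).variance_eq ▸ hvar)
    (iIndepFun_infinitePi fun _ ↦ hfm) (fun i ↦ (hident i).trans (hident 0).symm) a
  refine ⟨c, hc, hev.mono fun n hn ↦ hn.trans_eq ?_⟩
  have hmeas : MeasurableSet {x : Fin n → Ω | n * μ[f] + a * √n < ∑ k, f (x k)} :=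
    measurableSet_lt measurable_const (by fun_prop)
  rw [← Measure.infinitePi_eq_pi,
    ← Measure.map_infinitePi_infinitePi_of_inj (P := fun _ : ℕ ↦ μ) (Fin.val_injective (n := n)),
    map_measureReal_apply (by fun_prop) hmeas, (hident 0).integral_eq]
  simp only [Finset.sum_range, Set.preimage_ofPred_eq]

end CentralLimit

section FiniteDistribution

variable {ι : Type*} [Fintype ι] {p : ι → ℝ}

theorem exists_pos_eventually_le_sum_prod (hp : p ∈ stdSimplex ℝ ι) {f : ι → ℝ}
    (hvar : 0 < ∑ i, p i * (f i - ∑ j, p j * f j) ^ 2) (a : ℝ) :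
    ∃ c : ℝ, 0 < c ∧ ∀ᶠ n : ℕ in atTop,
      c ≤ ∑ x : Fin n → ι with n * ∑ i, p i * f i + a * √n < ∑ k, f (x k), ∏ k, p (x k) := by
  let _ : MeasurableSpace ι := ⊤
  have : MeasurableSingletonClass ι := ⟨fun _ ↦ trivial⟩
  let q : PMF ι := PMF.ofFintype (fun i ↦ ENNReal.ofReal (p i)) (by
    rw [← ENNReal.ofReal_sum_of_nonneg fun i _ ↦ hp.1 i, hp.2, ENNReal.ofReal_one])
  have hq : ∀ i, (q i).toReal = p i := fun i ↦ ENNReal.toReal_ofReal (hp.1 i)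
  have hint : ∀ g : ι → ℝ, ∫ i, g i ∂q.toMeasure = ∑ i, p i * g i := fun g ↦ by
    simp only [PMF.integral_eq_sum, hq, smul_eq_mul]
  have hprod : ∀ {n : ℕ} (x : Fin n → ι),
      (Measure.pi fun _ ↦ q.toMeasure).real {x} = ∏ k, p (x k) := fun x ↦ by
    simp [measureReal_def, Measure.pi_singleton, hq]
  have hvarq : Var[f; q.toMeasure] = ∑ i, p i * (f i - ∑ j, p j * f j) ^ 2 := by
    rw [variance_eq_integral (by fun_prop), hint, hint]
  obtain ⟨c, hc, hev⟩ := exists_pos_eventually_le_pi_real_lt_sum (measurable_of_countable f)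
    MemLp.of_discrete (hvarq ▸ hvar) a
  refine ⟨c, hc, hev.mono fun n hn ↦ hn.trans_eq ?_⟩
  simp only [← hprod, sum_measureReal_singleton, hint, Finset.coe_filter_univ]

/-- The Shannon entropy, in bits, of a distribution on a finite type. Applied to the eigenvalues
of a density matrix it is the von Neumann entropy `E`. -/
noncomputable def shannonEntropy (p : ι → ℝ) : ℝ :=
  -∑ i, p i * Real.logb 2 (p i)

/-- The variance of the information content `-log₂ p`, sometimes called varentropy. Applied to the
eigenvalues of a density matrix it is `α ^ 2`. -/
noncomputable def informationVariance (p : ι → ℝ) : ℝ :=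
  ∑ i, p i * (Real.logb 2 (p i) + shannonEntropy p) ^ 2

theorem prod_le_rpow_neg_of_le_sum_neg_logb {κ : Type*} {s : Finset κ} {q : κ → ℝ}
    (hq : ∀ k ∈ s, 0 ≤ q k) {b t : ℝ} (hb : 1 < b) (ht : t ≤ ∑ k ∈ s, -Real.logb b (q k)) :
    ∏ k ∈ s, q k ≤ b ^ (-t) := by
  rcases (Finset.prod_nonneg hq).eq_or_lt with h0 | hpos
  · exact h0 ▸ Real.rpow_nonneg (zero_le_one.trans hb.le) _
  · rw [← Real.logb_le_iff_le_rpow hb hpos,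
      Real.logb_prod _ _ fun k hk ↦ (Finset.prod_ne_zero_iff.1 hpos.ne') k hk]
    rw [Finset.sum_neg_distrib] at ht
    exact le_neg_of_le_neg ht

theorem exists_pos_eventually_le_sum_prod_of_informationVariance_pos (hp : p ∈ stdSimplex ℝ ι)
    (hvar : 0 < informationVariance p) (a : ℝ) :
    ∃ c : ℝ, 0 < c ∧ ∀ᶠ n : ℕ in atTop, ∃ T : Finset (Fin n → ι),
      c ≤ ∑ x ∈ T, ∏ k, p (x k) ∧
        ∀ x ∈ T, ∏ k, p (x k) ≤ (2 : ℝ) ^ (-(n * shannonEntropy p + a * √n)) := by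
  have hmean : ∑ i, p i * -Real.logb 2 (p i) = shannonEntropy p := by
    simp only [shannonEntropy, mul_neg, Finset.sum_neg_distrib]
  have hvar' : 0 < ∑ i, p i * (-Real.logb 2 (p i) - ∑ j, p j * -Real.logb 2 (p j)) ^ 2 := by
    simpa only [informationVariance, hmean, ← neg_add', neg_sq] using hvar
  obtain ⟨c, hc, hev⟩ := exists_pos_eventually_le_sum_prod hp hvar' a
  refine ⟨c, hc, hev.mono fun n hn ↦ ⟨_, hn, fun x hx ↦ ?_⟩⟩
  rw [Finset.mem_filter, hmean] at hx
  exact prod_le_rpow_neg_of_le_sum_neg_logb (fun k _ ↦ hp.1 (x k)) one_lt_two hx.2.le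

theorem prod_comp_mem_stdSimplex (hp : p ∈ stdSimplex ℝ ι) (κ : Type*) [Fintype κ]
    [DecidableEq κ] :
    (fun x : κ → ι ↦ ∏ k, p (x k)) ∈ stdSimplex ℝ (κ → ι) :=
  ⟨fun x ↦ Finset.prod_nonneg fun k _ ↦ hp.1 (x k), by
    rw [← Fintype.prod_sum fun _ : κ ↦ p, Finset.prod_congr rfl fun _ _ ↦ hp.2,
      Finset.prod_const_one]⟩

end FiniteDistribution

section Projection

variable {m : Type*} [Fintype m]

theorem trace_eq_rank_of_isIdempotentElem {K : Type*} [Field K] {P : Matrix m m K}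
    (hP : IsIdempotentElem P) : P.trace = P.rank := by
  classical
  have hP' : IsIdempotentElem P.toLin' := hP.map Matrix.toLinAlgEquiv'
  rw [← Matrix.trace_toLin'_eq, (LinearMap.IsIdempotentElem.isProj_range _ hP').trace]
  rfl

variable {𝕜 : Type*} [RCLike 𝕜] {P : Matrix m m 𝕜}

theorem posSemidef_of_isStarProjection (hP : IsStarProjection P) : P.PosSemidef := by
  have h := Matrix.posSemidef_conjTranspose_mul_self P
  rwa [← Matrix.star_eq_conjTranspose, hP.isSelfAdjoint.star_eq, hP.isIdempotentElem.eq] at h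

theorem re_diag_mem_Icc_of_isStarProjection (hP : IsStarProjection P) (i : m) :
    RCLike.re (P i i) ∈ Set.Icc (0 : ℝ) 1 := by
  classical
  have h0 := (posSemidef_of_isStarProjection hP).diag_nonneg (i := i)
  have h1 := (posSemidef_of_isStarProjection hP.one_sub).diag_nonneg (i := i)
  rw [Matrix.sub_apply, Matrix.one_apply_eq] at h1
  exact ⟨(RCLike.nonneg_iff.1 h0).1, by simpa using (RCLike.nonneg_iff.1 h1).1⟩

theorem re_trace_mul_diagonal_le [DecidableEq m] (hP : IsStarProjection P) {d : m → ℝ}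
    {l : ℝ} (hl : 0 ≤ l) {T : Finset m} (hT : ∀ x ∈ T, d x ≤ l) (hd : ∀ x ∉ T, 0 ≤ d x) :
    RCLike.re (P * Matrix.diagonal fun x ↦ (d x : 𝕜)).trace ≤ P.rank * l + ∑ x ∈ Tᶜ, d x := by
  have hmem := re_diag_mem_Icc_of_isStarProjection hP
  have hrank : ∑ x, RCLike.re (P x x) = P.rank := by
    simpa [Matrix.trace] using
      congrArg RCLike.re (trace_eq_rank_of_isIdempotentElem hP.isIdempotentElem)
  calc RCLike.re (P * Matrix.diagonal fun x ↦ (d x : 𝕜)).trace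
      = ∑ x ∈ T, RCLike.re (P x x) * d x + ∑ x ∈ Tᶜ, RCLike.re (P x x) * d x := by
        simp [Matrix.trace, Matrix.mul_diagonal, Finset.sum_add_sum_compl]
    _ ≤ ∑ x ∈ T, RCLike.re (P x x) * l + ∑ x ∈ Tᶜ, d x := by
        gcongr with x hx x hx
        · exact (hmem x).1
        · exact hT x hx
        · exact mul_le_of_le_one_left (hd x (Finset.mem_compl.1 hx)) (hmem x).2
    _ ≤ ∑ x, RCLike.re (P x x) * l + ∑ x ∈ Tᶜ, d x := by
        gcongr ?_ + _
        exact Finset.sum_le_univ_sum_of_nonneg fun x ↦ mul_nonneg (hmem x).1 hl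
    _ = P.rank * l + ∑ x ∈ Tᶜ, d x := by rw [← Finset.sum_mul, hrank]

end Projection

section SignificantDimension

variable {m : Type*} [Fintype m] [DecidableEq m]

theorem exists_isStarProjection_rank_eq_sigDim {σ : Matrix m m ℂ} {δ : ℝ} (hδ : δ ≤ σ.trace.re) :
    ∃ P : Matrix m m ℂ, IsStarProjection P ∧ δ ≤ (P * σ).trace.re ∧ P.rank = sigDim σ δ := by
  obtain ⟨P, hherm, hidem, hPδ, hrank⟩ := Nat.sInf_mem (s := {k : ℕ | ∃ P : Matrix m m ℂ,
    P.IsHermitian ∧ P * P = P ∧ δ ≤ ((P * σ).trace).re ∧ P.rank = k})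
    ⟨_, 1, Matrix.isHermitian_one, one_mul 1, by rwa [one_mul], rfl⟩
  exact ⟨P, ⟨hidem, hherm⟩, hPδ, hrank⟩

theorem sub_sum_compl_le_sigDim_diagonal_mul {d : m → ℝ} {δ l : ℝ} (hδ : δ ≤ ∑ x, d x)
    (hl : 0 ≤ l) {T : Finset m} (hT : ∀ x ∈ T, d x ≤ l) (hd : ∀ x ∉ T, 0 ≤ d x) :
    δ - ∑ x ∈ Tᶜ, d x ≤ sigDim (Matrix.diagonal fun x ↦ (d x : ℂ)) δ * l := by
  have htrace : δ ≤ (Matrix.diagonal fun x ↦ (d x : ℂ)).trace.re := by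
    simpa [Matrix.trace_diagonal] using hδ
  obtain ⟨P, hP, hPδ, hrank⟩ := exists_isStarProjection_rank_eq_sigDim htrace
  rw [← hrank, sub_le_iff_le_add]
  exact hPδ.trans (re_trace_mul_diagonal_le hP hl hT hd)

theorem trace_conjStarAlgAut {R : Type*} [CommRing R] [StarRing R] (U : Matrix.unitaryGroup m R)
    (A : Matrix m m R) : (Unitary.conjStarAlgAut R _ U A).trace = A.trace := by
  rw [Unitary.conjStarAlgAut_apply, Matrix.trace_mul_cycle, Unitary.coe_star_mul_self, one_mul]

theorem rank_conjStarAlgAut {R : Type*} [CommRing R] [StarRing R] (U : Matrix.unitaryGroup m R)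
    (A : Matrix m m R) : (Unitary.conjStarAlgAut R _ U A).rank = A.rank := by
  rw [Unitary.conjStarAlgAut_apply, ← Unitary.coe_star,
    Matrix.rank_mul_eq_left_of_isUnit_det _ _ (Matrix.UnitaryGroup.det_isUnit (star U)),
    Matrix.rank_mul_eq_right_of_isUnit_det _ _ (Matrix.UnitaryGroup.det_isUnit U)]

theorem sigDim_conjStarAlgAut (U : Matrix.unitaryGroup m ℂ) (σ : Matrix m m ℂ) (δ : ℝ) :
    sigDim (Unitary.conjStarAlgAut ℂ _ U σ) δ = sigDim σ δ := by
  set φ := Unitary.conjStarAlgAut ℂ (Matrix m m ℂ) U with hφ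
  refine congrArg sInf (Set.ext fun k ↦ (φ.toEquiv.exists_congr fun P ↦ ?_).symm)
  change star P = P ∧ _ ↔
    star (φ P) = φ P ∧ φ P * φ P = φ P ∧ δ ≤ (φ P * φ σ).trace.re ∧ (φ P).rank = k
  simp only [← map_star, ← map_mul, EmbeddingLike.apply_eq_iff_eq]
  rw [hφ, trace_conjStarAlgAut, rank_conjStarAlgAut]

end SignificantDimension

section KroneckerPower

variable {ι : Type*}

theorem kronPow_mul [Fintype ι] (A B : Matrix ι ι ℂ) (n : ℕ) :
    kronPow (A * B) n = kronPow A n * kronPow B n := by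
  ext i j
  simp only [kronPow, Matrix.of_apply, Matrix.mul_apply, Fintype.prod_sum,
    ← Finset.prod_mul_distrib]

theorem kronPow_star (A : Matrix ι ι ℂ) (n : ℕ) : kronPow (star A) n = star (kronPow A n) := by
  ext i j
  simp [kronPow, Matrix.star_apply]

variable [DecidableEq ι]

theorem kronPow_diagonal (d : ι → ℂ) (n : ℕ) :
    kronPow (Matrix.diagonal d) n = Matrix.diagonal fun x : Fin n → ι ↦ ∏ k, d (x k) := by
  ext i j
  rcases eq_or_ne i j with rfl | hij
  · simp [kronPow]
  · obtain ⟨k, hk⟩ := Function.ne_iff.1 hij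
    rw [Matrix.diagonal_apply_ne _ hij]
    exact Finset.prod_eq_zero (Finset.mem_univ k) (Matrix.diagonal_apply_ne _ hk)

theorem kronPow_one (n : ℕ) : kronPow (1 : Matrix ι ι ℂ) n = 1 := by
  rw [← Matrix.diagonal_one, kronPow_diagonal, Finset.prod_const_one, Matrix.diagonal_one]

variable [Fintype ι]

theorem kronPow_mem_unitaryGroup {U : Matrix ι ι ℂ} (hU : U ∈ Matrix.unitaryGroup ι ℂ) (n : ℕ) :
    kronPow U n ∈ Matrix.unitaryGroup (Fin n → ι) ℂ := by
  rw [Matrix.mem_unitaryGroup_iff, ← kronPow_star, ← kronPow_mul,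
    Matrix.mem_unitaryGroup_iff.1 hU, kronPow_one]

theorem sigDim_kronPow_eq_sigDim_diagonal {ρ : Matrix ι ι ℂ} (hρ : ρ.IsHermitian) (n : ℕ)
    (δ : ℝ) :
    sigDim (kronPow ρ n) δ = sigDim
      (Matrix.diagonal fun x : Fin n → ι ↦ ((∏ k, hρ.eigenvalues (x k) : ℝ) : ℂ)) δ := by
  have hspec : kronPow ρ n = Unitary.conjStarAlgAut ℂ _
      (⟨_, kronPow_mem_unitaryGroup hρ.eigenvectorUnitary.2 n⟩ : Matrix.unitaryGroup _ ℂ)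
      (Matrix.diagonal fun x ↦ ((∏ k, hρ.eigenvalues (x k) : ℝ) : ℂ)) := by
    conv_lhs => rw [hρ.spectral_theorem, Unitary.conjStarAlgAut_apply, kronPow_mul, kronPow_mul,
      kronPow_diagonal, kronPow_star]
    simp [Unitary.conjStarAlgAut_apply]
  rw [hspec, sigDim_conjStarAlgAut]

end KroneckerPower

theorem eigenvalues_mem_stdSimplex {ι : Type*} [Fintype ι] [DecidableEq ι] {ρ : Matrix ι ι ℂ}
    (hρ : IsDensity ρ) : hρ.1.isHermitian.eigenvalues ∈ stdSimplex ℝ ι := by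
  refine ⟨hρ.1.eigenvalues_nonneg, ?_⟩
  have htrace := hρ.1.isHermitian.trace_eq_sum_eigenvalues.symm.trans hρ.2
  simp only [Complex.coe_algebraMap] at htrace
  exact mod_cast htrace

theorem sigDim_kronPow_lower_bound_general {ι : Type*} [Fintype ι] [DecidableEq ι]
    (ρ : Matrix ι ι ℂ) (hρ : IsDensity ρ)
    (hvar : 0 < informationVariance hρ.1.isHermitian.eigenvalues) (a : ℝ) :
    ∃ δ C : ℝ, ∃ n₀ : ℕ, δ < 1 ∧ 0 < C ∧ ∀ n : ℕ, n₀ ≤ n →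
      C * (2 : ℝ) ^ (n * shannonEntropy hρ.1.isHermitian.eigenvalues + a * √n) <
        sigDim (kronPow ρ n) δ := by
  have hp := eigenvalues_mem_stdSimplex hρ
  obtain ⟨c, hc, hev⟩ := exists_pos_eventually_le_sum_prod_of_informationVariance_pos hp hvar a
  obtain ⟨n₀, hn₀⟩ := eventually_atTop.1 hev
  refine ⟨1 - c / 2, c / 4, n₀, by linarith, by linarith, fun n hn ↦ ?_⟩
  obtain ⟨T, hcT, hT⟩ := hn₀ n hn
  have hprod := prod_comp_mem_stdSimplex hp (Fin n)
  have hsum : ∑ x : Fin n → ι, ∏ k, hρ.1.isHermitian.eigenvalues (x k) = 1 := hprod.2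
  have hrank := sub_sum_compl_le_sigDim_diagonal_mul (δ := 1 - c / 2)
    (by linarith) (by positivity) hT fun x _ ↦ hprod.1 x
  have hsplit := (Finset.sum_add_sum_compl T _).trans hsum
  rw [← sigDim_kronPow_eq_sigDim_diagonal, Real.rpow_neg zero_le_two, ← div_eq_mul_inv,
    le_div_iff₀ (by positivity)] at hrank
  refine lt_of_lt_of_le ?_ hrank
  gcongr
  linarith

/-- for a density matrix `ρ` with entropy `E` and spectral deviation `α > 0`,
there exist `δ < 1`, `C > 0` and `n₀` such that for all `n ≥ n₀`,
`𝒮(ρ^{⊗n}, δ) > C · 2^{nE + α√n}`. -/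
theorem sigDim_kronPow_lower_bound {ι : Type*} [Fintype ι] [DecidableEq ι] [Nonempty ι]
    (ρ : Matrix ι ι ℂ) (hρ : IsDensity ρ)
    (E α β : ℝ)
    (hE : E = -∑ i, hρ.1.isHermitian.eigenvalues i *
        Real.logb 2 (hρ.1.isHermitian.eigenvalues i))
    (hα : α = Real.sqrt (∑ i, hρ.1.isHermitian.eigenvalues i *
        (Real.logb 2 (hρ.1.isHermitian.eigenvalues i) + E) ^ 2))
    (hβ : β = ∑ i, hρ.1.isHermitian.eigenvalues i *
        |Real.logb 2 (hρ.1.isHermitian.eigenvalues i) + E| ^ 3)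
    (hαpos : 0 < α) :
    ∃ δ C : ℝ, ∃ n₀ : ℕ, δ < 1 ∧ 0 < C ∧
      ∀ n : ℕ, n₀ ≤ n →
        C * (2 : ℝ) ^ ((n : ℝ) * E + α * Real.sqrt n) < (sigDim (kronPow ρ n) δ : ℝ) := by
  subst hE hα
  exact sigDim_kronPow_lower_bound_general ρ hρ (Real.sqrt_pos.1 hαpos) _
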